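/- Let λ be a Borel probability measure on [0,1] and let 𝒫¹ and 𝒫² be two sequences of partitions that are log-balanced a.e. with respect to λ, with weight functions f₁ and f₂ respectively. If f₂ is nondecreasing, then limsup_{n→∞} f₂(L_n(x,𝒫¹,𝒫²))/f₁(n) ≤ 1 for λ-almost every x. -/

import Mathlib

open MeasureTheory Filter Set Asymptotics

noncomputable section

/-- A topological partition of `[0,1]`: an (automatically at most countable) collection of
pairwise disjoint nonempty open subintervals of `[0,1]` whose closures cover `[0,1]`. -/
def IsTopPartition (P : Set (Set ℝ)) : Prop :=
  P.Countable ∧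
  (∀ I ∈ P, ∃ a b : ℝ, a < b ∧ 0 ≤ a ∧ b ≤ 1 ∧ I = Set.Ioo a b) ∧
  P.PairwiseDisjoint id ∧
  (⋃ I ∈ P, closure I) = Set.Icc (0 : ℝ) 1

/-- The set `E^Ps` of endpoints of the intervals of the partitions of the sequence `Ps`:
the points of `[0,1]` not covered by the open intervals of some partition. -/
def endpointSet (Ps : ℕ → Set (Set ℝ)) : Set ℝ :=
  ⋃ n, (Set.Icc (0 : ℝ) 1 \ ⋃₀ Ps n)

/-- `I_n^Ps(x)`: the unique interval of the partition `P` containing `x`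
(the empty set if there is none). -/
def cell (P : Set (Set ℝ)) (x : ℝ) : Set ℝ :=
  ⋃₀ {I | I ∈ P ∧ x ∈ I}

/-- A sequence of partitions is self-refining if every interval at depth `n+1` is contained
in an interval at depth `n`. -/
def SelfRefining (Ps : ℕ → Set (Set ℝ)) : Prop :=
  ∀ n, ∀ I ∈ Ps (n + 1), ∃ J ∈ Ps n, I ⊆ J

/-- Strictly self-refining: self-refining with `P_{n+1} ≠ P_n` for all `n`. -/
def StrictSelfRefining (Ps : ℕ → Set (Set ℝ)) : Prop :=
  SelfRefining Ps ∧ ∀ n, Ps (n + 1) ≠ Ps n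

/-- `Ps` is log-balanced a.e. with respect to `lam` with weight function `f`. -/
def LogBalancedAE (lam : Measure ℝ) (Ps : ℕ → Set (Set ℝ)) (f : ℕ → ℝ) : Prop :=
  lam (endpointSet Ps) = 0 ∧ Tendsto f atTop atTop ∧
    ∀ᵐ x ∂lam,
      Tendsto (fun n => -Real.log ((lam (cell (Ps n) x)).toReal) / f n) atTop (nhds 1)

/-- `Ps` is log-balanced in measure with respect to `lam` with weight function `f`. -/
def LogBalancedInMeasure (lam : Measure ℝ) (Ps : ℕ → Set (Set ℝ)) (f : ℕ → ℝ) : Prop :=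
  lam (endpointSet Ps) = 0 ∧ Tendsto f atTop atTop ∧
    TendstoInMeasure lam
      (fun n x => -Real.log ((lam (cell (Ps n) x)).toReal) / f n) atTop (fun _ => 1)

/-- The Lochs index `L_n(x, Ps¹, Ps²)`. -/
def lochsIndex (P1 P2 : ℕ → Set (Set ℝ)) (n : ℕ) (x : ℝ) : ℕ :=
  sSup {ℓ : ℕ | cell (P1 n) x ⊆ cell (P2 ℓ) x}

/-- The generalized inverse `f^{[-1]}(y) = min {n : f n ≥ y}` of a weight function. -/
def weightInv (f : ℕ → ℝ) (y : ℝ) : ℕ := sInf {n : ℕ | y ≤ f n}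

/-!
Write `u n = -log λ(I_n¹(x))` and `v ℓ = -log λ(I_ℓ²(x))`. If `I_n¹(x) ⊆ I_ℓ²(x)` then `v ℓ ≤ u n`,
so the Lochs index `L n` satisfies `v (L n) ≤ u n`. As `v ∼ f₂`, for each `a > 1` the bound
`f₂ ≤ a * v` holds up to an additive constant `C` absorbing finitely many indices. Hence
`f₂ (L n) ≤ a * u n + C`, and dividing by `f₁ n ∼ u n → ∞` leaves at most `a` in the limit.
-/

open scoped Topology

section

variable {α ι : Type*} [MeasurableSpace α] {μ : Measure α} {l : Filter ι}

theorem exists_forall_le_mul_add_of_isEquivalent {v g : ℕ → ℝ} (hv : v ~[atTop] g)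
    (hg : Tendsto g atTop atTop) {a : ℝ} (ha : 1 < a) : ∃ C, ∀ n, g n ≤ a * v n + C := by
  have hv_top : Tendsto v atTop atTop := hv.symm.tendsto_atTop hg
  have hratio : Tendsto (g / v) atTop (𝓝 1) :=
    (isEquivalent_iff_tendsto_one (hv_top.eventually_ne_atTop 0)).1 hv.symm
  have hle : ∀ᶠ n in atTop, g n - a * v n ≤ 0 := by
    filter_upwards [hratio.eventually_le_const ha, hv_top.eventually_gt_atTop 0] with n hn hpos
    exact sub_nonpos.2 ((div_le_iff₀ hpos).1 hn)
  obtain ⟨C, hC⟩ := (isBoundedUnder_of_eventually_le hle).bddAbove_range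
  exact ⟨C, fun n => sub_le_iff_le_add'.1 (hC (mem_range_self n))⟩

theorem isBoundedUnder_ge_comp_div {κ : Type*} {f : ι → ℝ} {g : κ → ℝ}
    (hg : BddBelow (range g)) (hf : Tendsto f l atTop) (L : ι → κ) :
    IsBoundedUnder (· ≥ ·) l fun i => g (L i) / f i := by
  obtain ⟨m, hm⟩ := hg
  refine (hf.const_div_atTop m).isBoundedUnder_ge.mono_ge ?_
  filter_upwards [hf.eventually_gt_atTop 0] with i hpos
  exact div_le_div_of_nonneg_right (hm (mem_range_self _)) hpos.le

theorem limsup_comp_div_le_one [l.NeBot] {u f : ι → ℝ} {v g : ℕ → ℝ} {L : ι → ℕ}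
    (hu : u ~[l] f) (hf : Tendsto f l atTop) (hv : v ~[atTop] g) (hg : Tendsto g atTop atTop)
    (hL : ∀ᶠ i in l, v (L i) ≤ u i) :
    limsup (fun i => g (L i) / f i) l ≤ 1 := by
  refine le_of_forall_gt_imp_ge_of_dense fun a ha => ?_
  obtain ⟨C, hC⟩ := exists_forall_le_mul_add_of_isEquivalent hv hg ha
  have hbdd : IsBoundedUnder (· ≥ ·) l fun i => g (L i) / f i :=
    isBoundedUnder_ge_comp_div (bddBelow_range_of_tendsto_atTop_atTop hg) hf L
  have hratio : Tendsto (u / f) l (𝓝 1) :=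
    (isEquivalent_iff_tendsto_one (hf.eventually_ne_atTop 0)).1 hu
  have hbound : Tendsto (fun i => a * (u i / f i) + C / f i) l (𝓝 a) := by
    simpa only [Pi.div_apply, mul_one, add_zero] using
      (hratio.const_mul a).add (hf.const_div_atTop C)
  have hle : ∀ᶠ i in l, g (L i) / f i ≤ a * (u i / f i) + C / f i := by
    filter_upwards [hL, hf.eventually_gt_atTop 0] with i hLi hpos
    calc g (L i) / f i ≤ (a * v (L i) + C) / f i := by gcongr; exact hC _
      _ ≤ (a * u i + C) / f i := by gcongr
      _ = a * (u i / f i) + C / f i := by ring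
  calc limsup (fun i => g (L i) / f i) l
      ≤ limsup (fun i => a * (u i / f i) + C / f i) l :=
        limsup_le_limsup hle hbdd.isCoboundedUnder_le hbound.isBoundedUnder_le
    _ = a := hbound.limsup_eq

theorem nat_sSup_mem_or_eq_zero (s : Set ℕ) : sSup s ∈ s ∨ sSup s = 0 := by
  rcases s.eq_empty_or_nonempty with rfl | hne
  · exact .inr csSup_empty
  · by_cases hbdd : BddAbove s
    · exact .inl (Nat.sSup_mem hne hbdd)
    · exact .inr (Nat.sSup_of_not_bddAbove hbdd)

theorem neg_log_measureReal_le_of_subset {s t : Set α} (hst : s ⊆ t)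
    (hs : 0 < -Real.log (μ.real s)) :
    -Real.log (μ.real t) ≤ -Real.log (μ.real s) := by
  by_cases ht : μ t = ⊤
  · simpa only [measureReal_def, ht, ENNReal.toReal_top, Real.log_zero, neg_zero] using hs.le
  · have hs_ne : μ.real s ≠ 0 := fun h => by simp [h] at hs
    have hs_pos : 0 < μ.real s := measureReal_nonneg.lt_of_ne' hs_ne
    exact neg_le_neg (Real.log_le_log hs_pos (measureReal_mono hst ht))

theorem limsup_sSup_subset_div_le_one [l.NeBot] {A : ι → Set α} {B : ℕ → Set α}
    {f : ι → ℝ} {g : ℕ → ℝ} (hA : (fun i => -Real.log (μ.real (A i))) ~[l] f)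
    (hf : Tendsto f l atTop) (hB : (fun n => -Real.log (μ.real (B n))) ~[atTop] g)
    (hg : Tendsto g atTop atTop) :
    limsup (fun i => g (sSup {n | A i ⊆ B n}) / f i) l ≤ 1 := by
  refine limsup_comp_div_le_one hA hf hB hg ?_
  have hA_top : Tendsto (fun i => -Real.log (μ.real (A i))) l atTop := hA.symm.tendsto_atTop hf
  filter_upwards [hA_top.eventually_gt_atTop 0,
    hA_top.eventually_ge_atTop (-Real.log (μ.real (B 0)))] with i hpos hzero
  rcases nat_sSup_mem_or_eq_zero {n | A i ⊆ B n} with hsub | hsup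
  · exact neg_log_measureReal_le_of_subset hsub hpos
  -- The junk value `0` of `sSup` (empty or unbounded set) is a single index, so `hzero` covers it.
  · rwa [hsup]

end

theorem LogBalancedAE.ae_isEquivalent {lam : Measure ℝ} {Ps : ℕ → Set (Set ℝ)} {f : ℕ → ℝ}
    (h : LogBalancedAE lam Ps f) :
    ∀ᵐ x ∂lam, (fun n => -Real.log (lam.real (cell (Ps n) x))) ~[atTop] f := by
  obtain ⟨-, hf, hlim⟩ := h
  filter_upwards [hlim] with x hx
  exact (isEquivalent_iff_tendsto_one (hf.eventually_ne_atTop 0)).2 hx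

theorem lochs_limsup_ae_general (lam : Measure ℝ) (P1 P2 : ℕ → Set (Set ℝ)) (f₁ f₂ : ℕ → ℝ)
    (hb1 : LogBalancedAE lam P1 f₁) (hb2 : LogBalancedAE lam P2 f₂) :
    ∀ᵐ x ∂lam, limsup (fun n => f₂ (lochsIndex P1 P2 n x) / f₁ n) atTop ≤ 1 := by
  filter_upwards [hb1.ae_isEquivalent, hb2.ae_isEquivalent] with x hx1 hx2
  exact limsup_sSup_subset_div_le_one hx1 hb1.2.1 hx2 hb2.2.1

/-- Proposition: limsup of the normalized Lochs index is at most 1, a.e. -/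
theorem lochs_limsup_ae (lam : Measure ℝ) [IsProbabilityMeasure lam]
    (hlam : lam (Set.Icc (0 : ℝ) 1)ᶜ = 0)
    (P1 P2 : ℕ → Set (Set ℝ))
    (hP1 : ∀ n, IsTopPartition (P1 n)) (hP2 : ∀ n, IsTopPartition (P2 n))
    (f₁ f₂ : ℕ → ℝ)
    (hb1 : LogBalancedAE lam P1 f₁) (hb2 : LogBalancedAE lam P2 f₂)
    (hmono : Monotone f₂) :
    ∀ᵐ x ∂lam,
      Filter.limsup (fun n => f₂ (lochsIndex P1 P2 n x) / f₁ n) atTop ≤ 1 :=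
  lochs_limsup_ae_general lam P1 P2 f₁ f₂ hb1 hb2
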